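/- Let W≥0 and h>0 with h ≥ max_i max(P_{i+1}^{n−1}−P_i^{n−1}, P_{i+1}ⁿ−P_iⁿ), and assume |w_i| ≤ W for all i∈{1,…,N_p}. Then there exists a constant C>0 depending only on W (independent of Δt, h, the nodes N_p, and φ) such that for every φ∈C²([a,b]×[t^{n−1},tⁿ]): ( ∫_a^b [ ((Π_h(tⁿ)φ(·,tⁿ))(x) − (Π_h(t^{n−1})φ(·,t^{n−1}))(x))/Δt − (1/Δt)∫_{t^{n−1}}^{tⁿ} (Π_h(t)(∂_tφ(·,t)))(x) dt ]² dx )^{1/2} ≤ (C·h/√Δt) · ( ∫_{t^{n−1}}^{tⁿ} ∫_a^b (∂ₓ²φ(x,t))² dx dt )^{1/2}. -/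

import Mathlib

open MeasureTheory

/-- The continuous piecewise-affine hat function associated with node `i` of the
strictly increasing partition `Q 1 < Q 2 < … < Q N`.  On `[Q 1, Q N]` it is the usual
P1 basis function satisfying `hatFun Q N i (Q j) = δ_{ij}`. -/
noncomputable def hatFun (Q : ℕ → ℝ) (N i : ℕ) (x : ℝ) : ℝ :=
  max 0 (min
    ((x - (if i = 1 then Q 1 - 1 else Q (i - 1))) /
      (Q i - (if i = 1 then Q 1 - 1 else Q (i - 1))))
    (((if i = N then Q N + 1 else Q (i + 1)) - x) /
      ((if i = N then Q N + 1 else Q (i + 1)) - Q i)))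

/-- The P1 Lagrange interpolant of `f` on the partition `Q 1 < … < Q N`. -/
noncomputable def interp (Q : ℕ → ℝ) (N : ℕ) (f : ℝ → ℝ) (x : ℝ) : ℝ :=
  ∑ i ∈ Finset.Icc 1 N, f (Q i) * hatFun Q N i x

/-!
At a fixed point `x` which is not a node, the interpolant of `φ(·, t)` is differentiable in `t`, and
its derivative is the interpolant of `∂ₜφ` plus a remainder caused by the motion of the mesh. On an
element `K` this remainder is affine with nodal values `wᵢ (∂ₓφ(Pᵢ) - s)`, where `s` is the slope of
the interpolant. As `s` is a value of `∂ₓφ` inside `K`, the remainder is at most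
`W (|K| ∫_K (∂ₓ²φ)²)^(1/2)` on `K`, so that its `L²` norm at time `t` is at most
`W h ‖∂ₓ²φ(·, t)‖`. Almost every `x` is met by a node at only countably many times, so the
fundamental theorem of calculus writes the time difference as the time integral of the remainder,
and Cauchy–Schwarz in time concludes.
-/

open Set Filter Topology

section L2

variable {X Y : Type*} [MeasurableSpace X] [MeasurableSpace Y] {μ : Measure X} {ν : Measure Y}
  [IsFiniteMeasure ν]

theorem sq_integral_le_measureReal_mul_integral_sq {f : Y → ℝ} (hf : MemLp f 2 ν) :
    (∫ y, f y ∂ν) ^ 2 ≤ ν.real univ * ∫ y, f y ^ 2 ∂ν := by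
  rcases eq_zero_or_neZero ν with rfl | _
  · simp
  have jensen : (⨍ y, f y ∂ν) ^ 2 ≤ ⨍ y, f y ^ 2 ∂ν :=
    even_two.convexOn_pow.map_average_le (continuous_pow 2).continuousOn isClosed_univ
      (by simp) (hf.integrable one_le_two) hf.integrable_sq
  have mass_pos : 0 < ν.real univ := measureReal_univ_pos
  rw [average_eq, average_eq, smul_eq_mul, smul_eq_mul, mul_pow] at jensen
  calc (∫ y, f y ∂ν) ^ 2
      = ν.real univ ^ 2 * ((ν.real univ)⁻¹ ^ 2 * (∫ y, f y ∂ν) ^ 2) := by field_simp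
    _ ≤ ν.real univ ^ 2 * ((ν.real univ)⁻¹ * ∫ y, f y ^ 2 ∂ν) := by gcongr
    _ = ν.real univ * ∫ y, f y ^ 2 ∂ν := by field_simp

theorem integral_sq_integral_le_of_memLp_prod [SFinite μ] {f : X → Y → ℝ}
    (hf : MemLp (Function.uncurry f) 2 (μ.prod ν)) :
    ∫ x, (∫ y, f x y ∂ν) ^ 2 ∂μ ≤ ν.real univ * ∫ y, ∫ x, f x y ^ 2 ∂μ ∂ν := by
  have hf_sq : Integrable (Function.uncurry fun x y => f x y ^ 2) (μ.prod ν) := hf.integrable_sq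
  have hf_slice : ∀ᵐ x ∂μ, MemLp (f x) 2 ν := by
    filter_upwards [hf.aestronglyMeasurable.prodMk_left, hf_sq.prod_right_ae] with x hx hx_sq
    exact (memLp_two_iff_integrable_sq hx).2 hx_sq
  calc ∫ x, (∫ y, f x y ∂ν) ^ 2 ∂μ
      ≤ ∫ x, ν.real univ * ∫ y, f x y ^ 2 ∂ν ∂μ := by
        refine integral_mono_of_nonneg (ae_of_all _ fun x => sq_nonneg _)
          (hf_sq.integral_prod_left.const_mul _) ?_
        filter_upwards [hf_slice] with x hx using sq_integral_le_measureReal_mul_integral_sq hx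
    _ = ν.real univ * ∫ y, ∫ x, f x y ^ 2 ∂μ ∂ν := by
        rw [integral_const_mul, integral_integral_swap hf_sq]

end L2

section Deriv

theorem sq_intervalIntegral_le_sub_mul_integral_sq {g : ℝ → ℝ} (hg : Continuous g) {p q c e : ℝ}
    (hc : c ∈ Icc p q) (he : e ∈ Icc p q) :
    (∫ x in c..e, g x) ^ 2 ≤ (q - p) * ∫ x in p..q, g x ^ 2 := by
  have hpq : p ≤ q := hc.1.trans hc.2
  have hsub : uIoc c e ⊆ Ioc p q := Ioc_subset_Ioc (le_min hc.1 he.1) (max_le hc.2 he.2)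
  have hg_sq : IntegrableOn (fun x => g x ^ 2) (Ioc p q) := (hg.pow 2).integrableOn_Ioc
  have : IsFiniteMeasure (volume.restrict (uIoc c e)) := by unfold uIoc; infer_instance
  have hg_memLp : MemLp g 2 (volume.restrict (uIoc c e)) :=
    (memLp_two_iff_integrable_sq hg.aestronglyMeasurable).2 (hg_sq.mono_set hsub)
  calc (∫ x in c..e, g x) ^ 2
      = (∫ x in uIoc c e, g x) ^ 2 := by
        rw [← sq_abs, intervalIntegral.abs_integral_eq_abs_integral_uIoc, sq_abs]
    _ ≤ volume.real (uIoc c e) * ∫ x in uIoc c e, g x ^ 2 := by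
        simpa using sq_integral_le_measureReal_mul_integral_sq hg_memLp
    _ ≤ (q - p) * ∫ x in Ioc p q, g x ^ 2 := by
        have hvol : volume.real (uIoc c e) ≤ q - p :=
          (measureReal_mono hsub measure_Ioc_lt_top.ne).trans_eq (by simp [hpq])
        have hint : ∫ x in uIoc c e, g x ^ 2 ≤ ∫ x in Ioc p q, g x ^ 2 :=
          setIntegral_mono_set hg_sq (ae_of_all _ fun x => sq_nonneg _) hsub.eventuallyLE
        have := sub_nonneg.2 hpq
        gcongr
    _ = (q - p) * ∫ x in p..q, g x ^ 2 := by rw [intervalIntegral.integral_of_le hpq]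

theorem continuous_intervalIntegral_sq {g : ℝ → ℝ → ℝ}
    (hg : Continuous fun p : ℝ × ℝ => g p.1 p.2) (a b : ℝ) :
    Continuous fun t => ∫ x in a..b, g x t ^ 2 :=
  intervalIntegral.continuous_parametric_intervalIntegral_of_continuous'
    ((hg.comp continuous_swap).pow 2) a b

theorem sq_deriv_sub_slope_le {f : ℝ → ℝ} (hf : ContDiff ℝ 2 f) {p q e : ℝ} (hpq : p < q)
    (he : e ∈ Icc p q) :
    (deriv f e - slope f p q) ^ 2 ≤ (q - p) * ∫ x in p..q, deriv (deriv f) x ^ 2 := by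
  have hf' : ContDiff ℝ 1 (deriv f) := hf.deriv'
  obtain ⟨c, hc, hslope⟩ := exists_deriv_eq_slope' f hpq hf.continuous.continuousOn
    (hf.differentiable two_ne_zero).differentiableOn
  rw [← hslope, ← intervalIntegral.integral_deriv_eq_sub
    (fun x _ => hf'.differentiable one_ne_zero x) (hf'.continuous_deriv_one.intervalIntegrable _ _)]
  exact sq_intervalIntegral_le_sub_mul_integral_sq hf'.continuous_deriv_one
    (Ioo_subset_Icc_self hc) he

variable {φ : ℝ → ℝ → ℝ} {m n : WithTop ℕ∞}

theorem contDiff_deriv_fst (hφ : ContDiff ℝ n fun p : ℝ × ℝ => φ p.1 p.2) (hmn : m + 1 ≤ n) :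
    ContDiff ℝ m fun p : ℝ × ℝ => deriv (fun y => φ y p.2) p.1 := by
  have hswap : ContDiff ℝ n (Function.uncurry fun (p : ℝ × ℝ) y => φ y p.2) :=
    hφ.comp (contDiff_snd.prodMk (contDiff_snd.comp contDiff_fst))
  exact hswap.fderiv_apply contDiff_fst contDiff_const hmn

theorem contDiff_deriv_deriv_fst (hφ : ContDiff ℝ n fun p : ℝ × ℝ => φ p.1 p.2)
    (hmn : m + 1 + 1 ≤ n) :
    ContDiff ℝ m fun p : ℝ × ℝ => deriv (deriv fun y => φ y p.2) p.1 :=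
  contDiff_deriv_fst (φ := fun x t => deriv (fun y => φ y t) x) (contDiff_deriv_fst hφ hmn) le_rfl

theorem contDiff_deriv_snd (hφ : ContDiff ℝ n fun p : ℝ × ℝ => φ p.1 p.2) (hmn : m + 1 ≤ n) :
    ContDiff ℝ m fun p : ℝ × ℝ => deriv (φ p.1) p.2 := by
  have hassoc : ContDiff ℝ n (Function.uncurry fun (p : ℝ × ℝ) s => φ p.1 s) :=
    hφ.comp ((contDiff_fst.comp contDiff_fst).prodMk contDiff_snd)
  exact hassoc.fderiv_apply contDiff_snd contDiff_const hmn

theorem hasDerivAt_comp_path {p : ℝ → ℝ} {v t : ℝ}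
    (hφ : DifferentiableAt ℝ (fun z : ℝ × ℝ => φ z.1 z.2) (p t, t)) (hp : HasDerivAt p v t) :
    HasDerivAt (fun s => φ (p s) s)
      (deriv (φ (p t)) t + v * deriv (fun y => φ y t) (p t)) t := by
  set D := fderiv ℝ (fun z : ℝ × ℝ => φ z.1 z.2) (p t, t)
  have hD : HasFDerivAt (fun z : ℝ × ℝ => φ z.1 z.2) D (p t, t) := hφ.hasFDerivAt
  have hfst : deriv (fun y => φ y t) (p t) = D (1, 0) :=
    (hD.comp_hasDerivAt (f := fun y => (y, t)) (p t)
      ((hasDerivAt_id (p t)).prodMk (hasDerivAt_const (p t) t))).deriv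
  have hsnd : deriv (φ (p t)) t = D (0, 1) :=
    (hD.comp_hasDerivAt t ((hasDerivAt_const t (p t)).prodMk (hasDerivAt_id t))).deriv
  have hpath : HasDerivAt (fun s => φ (p s) s) (D (v, 1)) t :=
    hD.comp_hasDerivAt (f := fun s => (p s, s)) t (hp.prodMk (hasDerivAt_id t))
  have hsplit : ((v, 1) : ℝ × ℝ) = (0, 1) + v • (1, 0) := by simp
  rwa [hsplit, map_add, map_smul, smul_eq_mul, ← hfst, ← hsnd] at hpath

end Deriv

section AffineInterp

/-- The affine function of `x` with values `u` at `p` and `v` at `q`: the form which an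
interpolant, and the time derivative of one, takes on the element `[p, q]`. -/
noncomputable def affineInterp (p q u v x : ℝ) : ℝ :=
  u * ((q - x) / (q - p)) + v * ((x - p) / (q - p))

theorem abs_affineInterp_le {p q u v x M : ℝ} (hx : x ∈ Ioo p q) (hu : |u| ≤ M) (hv : |v| ≤ M) :
    |affineInterp p q u v x| ≤ M := by
  have hpx : 0 < x - p := sub_pos.2 hx.1
  have hxq : 0 < q - x := sub_pos.2 hx.2
  have hpq : 0 < q - p := by linarith
  calc |affineInterp p q u v x|
      ≤ |u| * ((q - x) / (q - p)) + |v| * ((x - p) / (q - p)) := by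
        refine (abs_add_le _ _).trans_eq ?_
        rw [abs_mul, abs_mul, abs_of_pos (div_pos hxq hpq), abs_of_pos (div_pos hpx hpq)]
    _ ≤ M * ((q - x) / (q - p)) + M * ((x - p) / (q - p)) := by gcongr
    _ = M := by field_simp; ring

theorem continuous_affineInterp (p q u v : ℝ) : Continuous (affineInterp p q u v) := by
  unfold affineInterp
  fun_prop

theorem hasDerivAt_affineInterp {p q u v : ℝ → ℝ} {p' q' u' v' t x : ℝ}
    (hpq : p t ≠ q t) (hp : HasDerivAt p p' t) (hq : HasDerivAt q q' t)
    (hu : HasDerivAt u u' t) (hv : HasDerivAt v v' t) :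
    HasDerivAt (fun s => affineInterp (p s) (q s) (u s) (v s) x)
      (affineInterp (p t) (q t) (u' - p' * ((v t - u t) / (q t - p t)))
        (v' - q' * ((v t - u t) / (q t - p t))) x) t := by
  have hne : q t - p t ≠ 0 := sub_ne_zero.2 hpq.symm
  have hderiv := (hu.mul ((hq.sub_const x).div (hq.sub hp) hne)).add
    (hv.mul ((hp.const_sub x).div (hq.sub hp) hne))
  refine hderiv.congr_deriv ?_
  simp only [affineInterp, Pi.sub_apply, Pi.div_apply]
  field_simp
  ring

theorem affineInterp_add (p q u₁ u₂ v₁ v₂ x : ℝ) :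
    affineInterp p q (u₁ + u₂) (v₁ + v₂) x =
      affineInterp p q u₁ v₁ x + affineInterp p q u₂ v₂ x := by
  simp only [affineInterp]
  ring

end AffineInterp

section Interp

variable {Q : ℕ → ℝ} {N i j : ℕ} {f : ℝ → ℝ} {x : ℝ}

/-- The node to the left of node `i` in the encoding of `hatFun`, where the first node gets the
fictitious neighbour `Q 1 - 1`. -/
noncomputable def prevNode (Q : ℕ → ℝ) (i : ℕ) : ℝ := if i = 1 then Q 1 - 1 else Q (i - 1)

/-- The node to the right of node `i` in the encoding of `hatFun`, where the last node gets the
fictitious neighbour `Q N + 1`. -/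
noncomputable def nextNode (Q : ℕ → ℝ) (N i : ℕ) : ℝ := if i = N then Q N + 1 else Q (i + 1)

theorem hatFun_eq_max_min (Q : ℕ → ℝ) (N i : ℕ) (x : ℝ) :
    hatFun Q N i x = max 0 (min ((x - prevNode Q i) / (Q i - prevNode Q i))
      ((nextNode Q N i - x) / (nextNode Q N i - Q i))) :=
  rfl

theorem prevNode_succ (hi : 1 ≤ i) : prevNode Q (i + 1) = Q i := by
  rw [prevNode, if_neg (by omega), Nat.add_sub_cancel]

theorem nextNode_of_lt (hi : i < N) : nextNode Q N i = Q (i + 1) := if_neg hi.ne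

theorem prevNode_lt (hQ : StrictMonoOn Q (Icc 1 N)) (hi : i ∈ Icc 1 N) : prevNode Q i < Q i := by
  unfold prevNode
  split_ifs with h
  · subst h
    exact sub_one_lt _
  · exact hQ ⟨by grind, by grind⟩ hi (by grind)

theorem lt_nextNode (hQ : StrictMonoOn Q (Icc 1 N)) (hi : i ∈ Icc 1 N) :
    Q i < nextNode Q N i := by
  unfold nextNode
  split_ifs with h
  · subst h
    exact lt_add_one _
  · exact hQ hi ⟨by grind, by grind⟩ (by grind)

theorem hatFun_eq_zero_of_le_prevNode (hQ : StrictMonoOn Q (Icc 1 N)) (hi : i ∈ Icc 1 N)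
    (hx : x ≤ prevNode Q i) : hatFun Q N i x = 0 :=
  max_eq_left <| (min_le_left _ _).trans <|
    div_nonpos_of_nonpos_of_nonneg (sub_nonpos.2 hx) (sub_pos.2 (prevNode_lt hQ hi)).le

theorem hatFun_eq_zero_of_nextNode_le (hQ : StrictMonoOn Q (Icc 1 N)) (hi : i ∈ Icc 1 N)
    (hx : nextNode Q N i ≤ x) : hatFun Q N i x = 0 :=
  max_eq_left <| (min_le_right _ _).trans <|
    div_nonpos_of_nonpos_of_nonneg (sub_nonpos.2 hx) (sub_pos.2 (lt_nextNode hQ hi)).le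

theorem hatFun_of_mem_Icc_left (hQ : StrictMonoOn Q (Icc 1 N)) (hi : i ∈ Icc 1 N)
    (hx : x ∈ Icc (prevNode Q i) (Q i)) :
    hatFun Q N i x = (x - prevNode Q i) / (Q i - prevNode Q i) := by
  have hprev : 0 < Q i - prevNode Q i := sub_pos.2 (prevNode_lt hQ hi)
  have hnext : 0 < nextNode Q N i - Q i := sub_pos.2 (lt_nextNode hQ hi)
  have hle : (x - prevNode Q i) / (Q i - prevNode Q i)
      ≤ (nextNode Q N i - x) / (nextNode Q N i - Q i) :=
    ((div_le_one hprev).2 (by linarith [hx.2])).trans ((one_le_div hnext).2 (by linarith [hx.2]))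
  rw [hatFun_eq_max_min, min_eq_left hle,
    max_eq_right (div_nonneg (sub_nonneg.2 hx.1) hprev.le)]

theorem hatFun_of_mem_Icc_right (hQ : StrictMonoOn Q (Icc 1 N)) (hi : i ∈ Icc 1 N)
    (hx : x ∈ Icc (Q i) (nextNode Q N i)) :
    hatFun Q N i x = (nextNode Q N i - x) / (nextNode Q N i - Q i) := by
  have hprev : 0 < Q i - prevNode Q i := sub_pos.2 (prevNode_lt hQ hi)
  have hnext : 0 < nextNode Q N i - Q i := sub_pos.2 (lt_nextNode hQ hi)
  have hle : (nextNode Q N i - x) / (nextNode Q N i - Q i)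
      ≤ (x - prevNode Q i) / (Q i - prevNode Q i) :=
    ((div_le_one hnext).2 (by linarith [hx.1])).trans ((one_le_div hprev).2 (by linarith [hx.1]))
  rw [hatFun_eq_max_min, min_eq_right hle,
    max_eq_right (div_nonneg (sub_nonneg.2 hx.2) hnext.le)]

theorem hatFun_eq_zero_of_mem_Icc (hQ : StrictMonoOn Q (Icc 1 N)) (hi : i ∈ Ico 1 N)
    (hj : j ∈ Icc 1 N) (hji : j ≠ i) (hji' : j ≠ i + 1) (hx : x ∈ Icc (Q i) (Q (i + 1))) :
    hatFun Q N j x = 0 := by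
  rw [mem_Ico] at hi
  rw [mem_Icc] at hj
  rcases hji.lt_or_gt with hlt | hgt
  · refine hatFun_eq_zero_of_nextNode_le hQ hj (le_trans ?_ hx.1)
    rw [nextNode_of_lt (by omega)]
    exact hQ.monotoneOn ⟨by omega, by omega⟩ ⟨hi.1, hi.2.le⟩ hlt
  · refine hatFun_eq_zero_of_le_prevNode hQ hj (hx.2.trans ?_)
    rw [prevNode, if_neg (by omega)]
    exact hQ.monotoneOn ⟨by omega, hi.2⟩ ⟨by omega, by omega⟩ (by omega)

theorem interp_eq_affineInterp (hQ : StrictMonoOn Q (Icc 1 N)) (hi : i ∈ Ico 1 N)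
    (hx : x ∈ Icc (Q i) (Q (i + 1))) :
    interp Q N f x = affineInterp (Q i) (Q (i + 1)) (f (Q i)) (f (Q (i + 1))) x := by
  have hnext : nextNode Q N i = Q (i + 1) := nextNode_of_lt hi.2
  have hprev : prevNode Q (i + 1) = Q i := prevNode_succ hi.1
  have hleft : hatFun Q N i x = (Q (i + 1) - x) / (Q (i + 1) - Q i) := by
    rw [hatFun_of_mem_Icc_right hQ ⟨hi.1, hi.2.le⟩ (by rwa [hnext]), hnext]
  have hright : hatFun Q N (i + 1) x = (x - Q i) / (Q (i + 1) - Q i) := by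
    rw [hatFun_of_mem_Icc_left hQ ⟨by omega, hi.2⟩ (by rwa [hprev]), hprev]
  have hsub : ({i, i + 1} : Finset ℕ) ⊆ Finset.Icc 1 N := by grind
  rw [interp, ← Finset.sum_subset hsub fun j hj hj' => ?_, Finset.sum_pair (by omega), hleft,
    hright, affineInterp]
  simp only [Finset.mem_insert, Finset.mem_singleton, not_or] at hj'
  rw [hatFun_eq_zero_of_mem_Icc hQ hi (Finset.mem_Icc.1 hj) hj'.1 hj'.2 hx, mul_zero]

theorem exists_mem_Icc_consecutive (hN : 1 ≤ N) (hx : x ∈ Ioc (Q 1) (Q N)) :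
    ∃ i ∈ Ico 1 N, x ∈ Icc (Q i) (Q (i + 1)) := by
  have hx' := Ioc_subset_biUnion_Ioc (N - 1) (fun i => Q (i + 1)) (by rwa [Nat.sub_add_cancel hN])
  simp only [mem_iUnion, Finset.mem_range] at hx'
  obtain ⟨i, hi, hxi⟩ := hx'
  exact ⟨i + 1, ⟨by omega, by omega⟩, Ioc_subset_Icc_self hxi⟩

theorem continuousOn_interp {X : Type*} [TopologicalSpace X] {s : Set X} {Q : X → ℕ → ℝ}
    {f : X → ℝ → ℝ} (hmesh : ∀ t ∈ s, StrictMonoOn (Q t) (Icc 1 N))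
    (hQ : ∀ i, ContinuousOn (fun t => Q t i) s) (hf : ∀ i, ContinuousOn (fun t => f t (Q t i)) s) :
    ContinuousOn (fun t => interp (Q t) N (f t) x) s := by
  have hprev : ∀ i, ContinuousOn (fun t => prevNode (Q t) i) s := by
    intro i
    unfold prevNode
    split_ifs
    exacts [(hQ 1).sub continuousOn_const, hQ (i - 1)]
  have hnext : ∀ i, ContinuousOn (fun t => nextNode (Q t) N i) s := by
    intro i
    unfold nextNode
    split_ifs
    exacts [(hQ N).add continuousOn_const, hQ (i + 1)]
  refine continuousOn_finsetSum _ fun i hi => (hf i).mul ?_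
  have hi : i ∈ Icc 1 N := Finset.mem_Icc.1 hi
  refine continuousOn_const.sup (ContinuousOn.inf ?_ ?_)
  · exact (continuousOn_const.sub (hprev i)).div ((hQ i).sub (hprev i))
      fun t ht => (sub_pos.2 (prevNode_lt (hmesh t ht) hi)).ne'
  · exact ((hnext i).sub continuousOn_const).div ((hnext i).sub (hQ i))
      fun t ht => (sub_pos.2 (lt_nextNode (hmesh t ht) hi)).ne'

end Interp

section Remainder

/-- The contribution of the motion of the mesh to the time derivative of the interpolant of `f` on
the element `[p, q]` whose endpoints move with velocities `v` and `w`. -/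
noncomputable def elementRemainder (f : ℝ → ℝ) (p q v w : ℝ) : ℝ → ℝ :=
  affineInterp p q (v * (deriv f p - slope f p q)) (w * (deriv f q - slope f p q))

/-- The contribution of the motion of the mesh `Q` with nodal velocities `w` to the time derivative
of the interpolant of `f`. It is set to `0` at the nodes, where that derivative need not exist. -/
noncomputable def meshRemainder (Q w : ℕ → ℝ) (N : ℕ) (f : ℝ → ℝ) (x : ℝ) : ℝ :=
  ∑ i ∈ Finset.Ico 1 N, (Ioo (Q i) (Q (i + 1))).indicator
    (elementRemainder f (Q i) (Q (i + 1)) (w i) (w (i + 1))) x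

variable {Q w : ℕ → ℝ} {N i : ℕ} {f : ℝ → ℝ} {x W h : ℝ}

theorem sq_elementRemainder_le (hf : ContDiff ℝ 2 f) {p q v w : ℝ} (hx : x ∈ Ioo p q)
    (hv : |v| ≤ W) (hw : |w| ≤ W) :
    elementRemainder f p q v w x ^ 2 ≤
      W ^ 2 * ((q - p) * ∫ y in p..q, deriv (deriv f) y ^ 2) := by
  have hpq : p < q := hx.1.trans hx.2
  set E := (q - p) * ∫ y in p..q, deriv (deriv f) y ^ 2
  have hE : 0 ≤ E := mul_nonneg (sub_pos.2 hpq).le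
    (intervalIntegral.integral_nonneg hpq.le fun _ _ => sq_nonneg _)
  have hnode : ∀ {e u : ℝ}, e ∈ Icc p q → |u| ≤ W → |u * (deriv f e - slope f p q)| ≤ W * √E := by
    intro e u he hu
    rw [abs_mul]
    exact mul_le_mul hu (Real.abs_le_sqrt (sq_deriv_sub_slope_le hf hpq he)) (abs_nonneg _)
      ((abs_nonneg u).trans hu)
  have hle : |elementRemainder f p q v w x| ≤ W * √E :=
    abs_affineInterp_le hx (hnode (left_mem_Icc.2 hpq.le) hv) (hnode (right_mem_Icc.2 hpq.le) hw)
  calc elementRemainder f p q v w x ^ 2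
      ≤ (W * √E) ^ 2 := sq_le_sq' (abs_le.1 hle).1 (abs_le.1 hle).2
    _ = W ^ 2 * E := by rw [mul_pow, Real.sq_sqrt hE]

theorem meshRemainder_of_mem_Ioo (hQ : StrictMonoOn Q (Icc 1 N)) (hi : i ∈ Ico 1 N)
    (hx : x ∈ Ioo (Q i) (Q (i + 1))) :
    meshRemainder Q w N f x = elementRemainder f (Q i) (Q (i + 1)) (w i) (w (i + 1)) x := by
  rw [meshRemainder, Finset.sum_eq_single_of_mem i (Finset.mem_Ico.2 hi), indicator_of_mem hx]
  intro j hj hji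
  refine indicator_of_notMem (fun hxj => hji ?_) _
  rw [Finset.mem_Ico] at hj
  have hij : i < j + 1 :=
    (hQ.lt_iff_lt ⟨hi.1, hi.2.le⟩ ⟨by omega, hj.2⟩).1 (hx.1.trans hxj.2)
  have hji : j < i + 1 :=
    (hQ.lt_iff_lt ⟨hj.1, hj.2.le⟩ ⟨by omega, hi.2⟩).1 (hxj.1.trans hx.2)
  omega

theorem meshRemainder_of_forall_notMem_Ioo (hx : ∀ i ∈ Ico 1 N, x ∉ Ioo (Q i) (Q (i + 1))) :
    meshRemainder Q w N f x = 0 :=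
  Finset.sum_eq_zero fun i hi => indicator_of_notMem (hx i (Finset.mem_Ico.1 hi)) _

theorem measurable_meshRemainder {X : Type*} [MeasurableSpace X] {Q : X → ℕ → ℝ} {f : X → ℝ → ℝ}
    {x : X → ℝ} (hx : Measurable x) (hQ : ∀ i, Measurable fun s => Q s i)
    (hf : ∀ i, Measurable fun s => f s (Q s i))
    (hf' : ∀ i, Measurable fun s => deriv (f s) (Q s i)) :
    Measurable fun s => meshRemainder (Q s) w N (f s) (x s) := by
  classical
  refine Finset.measurable_sum _ fun i _ => ?_
  simp only [indicator_apply]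
  refine Measurable.ite ?_ ?_ measurable_const
  · exact (measurableSet_lt (hQ i) hx).inter (measurableSet_lt hx (hQ (i + 1)))
  · simp only [elementRemainder, affineInterp, slope_def_field]
    have hslope : Measurable fun s =>
        (f s (Q s (i + 1)) - f s (Q s i)) / (Q s (i + 1) - Q s i) :=
      ((hf (i + 1)).sub (hf i)).div ((hQ (i + 1)).sub (hQ i))
    have hlen : Measurable fun s => Q s (i + 1) - Q s i := (hQ (i + 1)).sub (hQ i)
    exact ((((hf' i).sub hslope).const_mul _).mul (((hQ (i + 1)).sub hx).div hlen)).add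
      ((((hf' (i + 1)).sub hslope).const_mul _).mul ((hx.sub (hQ i)).div hlen))

theorem sq_meshRemainder_le_of_mem_Ioo (hQ : StrictMonoOn Q (Icc 1 N))
    (hsize : ∀ i ∈ Ico 1 N, Q (i + 1) - Q i ≤ h) (hw : ∀ i ∈ Icc 1 N, |w i| ≤ W)
    (hf : ContDiff ℝ 2 f) (hi : i ∈ Ico 1 N) (hx : x ∈ Ioo (Q i) (Q (i + 1))) :
    meshRemainder Q w N f x ^ 2 ≤
      W ^ 2 * (h * ∫ y in Q i..Q (i + 1), deriv (deriv f) y ^ 2) := by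
  have hint : 0 ≤ ∫ y in Q i..Q (i + 1), deriv (deriv f) y ^ 2 :=
    intervalIntegral.integral_nonneg (hx.1.trans hx.2).le fun _ _ => sq_nonneg _
  rw [meshRemainder_of_mem_Ioo hQ hi hx]
  refine (sq_elementRemainder_le hf hx (hw i ⟨hi.1, hi.2.le⟩)
    (hw (i + 1) ⟨by omega, hi.2⟩)).trans ?_
  have := hsize i hi
  gcongr

theorem sq_meshRemainder_le (hN : 2 ≤ N) (hQ : StrictMonoOn Q (Icc 1 N))
    (hsize : ∀ i ∈ Ico 1 N, Q (i + 1) - Q i ≤ h) (hw : ∀ i ∈ Icc 1 N, |w i| ≤ W)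
    (hf : ContDiff ℝ 2 f) :
    meshRemainder Q w N f x ^ 2 ≤ W ^ 2 * (h * ∫ y in Q 1..Q N, deriv (deriv f) y ^ 2) := by
  have hh : 0 ≤ h := (sub_pos.2 (hQ ⟨le_rfl, by omega⟩ ⟨by omega, hN⟩ one_lt_two)).le.trans
    (hsize 1 ⟨le_rfl, hN⟩)
  have hends : Q 1 ≤ Q N := hQ.monotoneOn ⟨le_rfl, by omega⟩ ⟨by omega, le_rfl⟩ (by omega)
  by_cases hx : ∃ i ∈ Ico 1 N, x ∈ Ioo (Q i) (Q (i + 1))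
  · obtain ⟨i, hi, hxi⟩ := hx
    refine (sq_meshRemainder_le_of_mem_Ioo hQ hsize hw hf hi hxi).trans ?_
    have hleft : Q 1 ≤ Q i := hQ.monotoneOn ⟨le_rfl, by omega⟩ ⟨hi.1, hi.2.le⟩ hi.1
    have hright : Q (i + 1) ≤ Q N := hQ.monotoneOn ⟨by omega, hi.2⟩ ⟨by omega, le_rfl⟩ hi.2
    have hcont : Continuous fun y => deriv (deriv f) y ^ 2 := hf.deriv'.continuous_deriv_one.pow 2
    have henergy : ∫ y in Q i..Q (i + 1), deriv (deriv f) y ^ 2 ≤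
        ∫ y in Q 1..Q N, deriv (deriv f) y ^ 2 :=
      intervalIntegral.integral_mono_interval hleft (hxi.1.trans hxi.2).le hright
        (ae_of_all _ fun y => sq_nonneg _) (hcont.intervalIntegrable _ _)
    gcongr
  · push Not at hx
    rw [meshRemainder_of_forall_notMem_Ioo hx, zero_pow two_ne_zero]
    have : 0 ≤ ∫ y in Q 1..Q N, deriv (deriv f) y ^ 2 :=
      intervalIntegral.integral_nonneg hends fun _ _ => sq_nonneg _
    positivity

theorem intervalIntegrable_sq_meshRemainder (hQ : StrictMonoOn Q (Icc 1 N)) (hi : i ∈ Ico 1 N) :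
    IntervalIntegrable (fun x => meshRemainder Q w N f x ^ 2) volume (Q i) (Q (i + 1)) := by
  have hlt : Q i < Q (i + 1) := hQ ⟨hi.1, hi.2.le⟩ ⟨by omega, hi.2⟩ i.lt_succ_self
  have hcont : Continuous fun x =>
      elementRemainder f (Q i) (Q (i + 1)) (w i) (w (i + 1)) x ^ 2 :=
    (continuous_affineInterp _ _ _ _).pow 2
  refine (hcont.intervalIntegrable _ _).congr_uIoo fun x hx => ?_
  rw [uIoo_of_le hlt.le] at hx
  exact congrArg (· ^ 2) (meshRemainder_of_mem_Ioo hQ hi hx).symm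

theorem integral_sq_meshRemainder_le (hN : 2 ≤ N) (hQ : StrictMonoOn Q (Icc 1 N))
    (hsize : ∀ i ∈ Ico 1 N, Q (i + 1) - Q i ≤ h) (hw : ∀ i ∈ Icc 1 N, |w i| ≤ W)
    (hf : ContDiff ℝ 2 f) :
    ∫ x in Q 1..Q N, meshRemainder Q w N f x ^ 2 ≤
      W ^ 2 * h ^ 2 * ∫ x in Q 1..Q N, deriv (deriv f) x ^ 2 := by
  have hcont : Continuous fun y => deriv (deriv f) y ^ 2 := hf.deriv'.continuous_deriv_one.pow 2
  have helem : ∀ i ∈ Finset.Ico 1 N, ∫ x in Q i..Q (i + 1), meshRemainder Q w N f x ^ 2 ≤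
      W ^ 2 * h ^ 2 * ∫ x in Q i..Q (i + 1), deriv (deriv f) x ^ 2 := by
    intro i hi
    rw [Finset.mem_Ico] at hi
    set I := ∫ x in Q i..Q (i + 1), deriv (deriv f) x ^ 2
    have hlt : Q i < Q (i + 1) := hQ ⟨hi.1, hi.2.le⟩ ⟨by omega, hi.2⟩ i.lt_succ_self
    have hI : 0 ≤ I := intervalIntegral.integral_nonneg hlt.le fun _ _ => sq_nonneg _
    have hh : Q (i + 1) - Q i ≤ h := hsize i hi
    have hh0 : 0 ≤ h := (sub_pos.2 hlt).le.trans hh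
    calc ∫ x in Q i..Q (i + 1), meshRemainder Q w N f x ^ 2
        ≤ ∫ _ in Q i..Q (i + 1), W ^ 2 * (h * I) :=
          intervalIntegral.integral_mono_on_of_le_Ioo hlt.le
            (intervalIntegrable_sq_meshRemainder hQ hi) intervalIntegrable_const
            fun x hx => sq_meshRemainder_le_of_mem_Ioo hQ hsize hw hf hi hx
      _ = (Q (i + 1) - Q i) * (W ^ 2 * (h * I)) := by
          rw [intervalIntegral.integral_const, smul_eq_mul]
      _ ≤ h * (W ^ 2 * (h * I)) := by gcongr
      _ = W ^ 2 * h ^ 2 * I := by ring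
  rw [← intervalIntegral.sum_integral_adjacent_intervals_Ico (a := Q) (by omega)
      fun i hi => intervalIntegrable_sq_meshRemainder hQ hi,
    ← intervalIntegral.sum_integral_adjacent_intervals_Ico (a := Q) (by omega)
      fun i _ => hcont.intervalIntegrable _ _, Finset.mul_sum]
  exact Finset.sum_le_sum helem

theorem hasDerivAt_interp {Q : ℝ → ℕ → ℝ} {φ : ℝ → ℝ → ℝ} {t : ℝ}
    (hQ : ∀ᶠ s in 𝓝 t, StrictMonoOn (Q s) (Icc 1 N))
    (hw : ∀ i, HasDerivAt (fun s => Q s i) (w i) t)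
    (hφ : Differentiable ℝ fun p : ℝ × ℝ => φ p.1 p.2) (hi : i ∈ Ico 1 N)
    (hx : x ∈ Ioo (Q t i) (Q t (i + 1))) :
    HasDerivAt (fun s => interp (Q s) N (fun y => φ y s) x)
      (interp (Q t) N (fun y => deriv (φ y) t) x
        + meshRemainder (Q t) w N (fun y => φ y t) x) t := by
  have hnode : ∀ j, HasDerivAt (fun s => φ (Q s j) s)
      (deriv (φ (Q t j)) t + w j * deriv (fun y => φ y t) (Q t j)) t :=
    fun j => hasDerivAt_comp_path (hφ (Q t j, t)) (hw j)
  have hlocal : (fun s => interp (Q s) N (fun y => φ y s) x) =ᶠ[𝓝 t] fun s =>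
      affineInterp (Q s i) (Q s (i + 1)) (φ (Q s i) s) (φ (Q s (i + 1)) s) x := by
    filter_upwards [hQ, (hw i).continuousAt.eventually_lt_const hx.1,
      (hw (i + 1)).continuousAt.eventually_const_lt hx.2] with s hs hleft hright
    exact interp_eq_affineInterp hs hi ⟨hleft.le, hright.le⟩
  have hderiv := hasDerivAt_affineInterp (x := x) (hx.1.trans hx.2).ne (hw i) (hw (i + 1))
    (hnode i) (hnode (i + 1))
  rw [interp_eq_affineInterp hQ.self_of_nhds hi (Ioo_subset_Icc_self hx),
    meshRemainder_of_mem_Ioo hQ.self_of_nhds hi hx]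
  refine (hderiv.congr_of_eventuallyEq hlocal).congr_deriv ?_
  rw [elementRemainder, ← affineInterp_add, slope_def_field]
  congr 1 <;> ring

end Remainder

section MovingMesh

/-- The position at time `t` of the node which is at `P i` at time `t₀` and moves with the constant
velocity `w i`. -/
def movingNode (P w : ℕ → ℝ) (t₀ t : ℝ) (i : ℕ) : ℝ := P i + w i * (t - t₀)

variable {P w : ℕ → ℝ} {N i j : ℕ} {φ : ℝ → ℝ → ℝ} {t₀ T t x W h : ℝ}

theorem movingNode_self (P w : ℕ → ℝ) (t₀ : ℝ) : movingNode P w t₀ t₀ = P := by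
  funext i
  simp [movingNode]

theorem movingNode_of_velocity_eq_zero (hi : w i = 0) : movingNode P w t₀ t i = P i := by
  simp [movingNode, hi]

theorem hasDerivAt_movingNode (P w : ℕ → ℝ) (t₀ t : ℝ) (i : ℕ) :
    HasDerivAt (fun s => movingNode P w t₀ s i) (w i) t := by
  simpa [movingNode] using (((hasDerivAt_id t).sub_const t₀).const_mul (w i)).const_add (P i)

theorem continuous_movingNode (P w : ℕ → ℝ) (t₀ : ℝ) (i : ℕ) :
    Continuous fun t => movingNode P w t₀ t i :=
  continuous_iff_continuousAt.2 fun t => (hasDerivAt_movingNode P w t₀ t i).continuousAt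

theorem movingNode_sub_movingNode_le (hstart : P j - P i ≤ h)
    (hend : movingNode P w t₀ T j - movingNode P w t₀ T i ≤ h) (ht : t ∈ Icc t₀ T) :
    movingNode P w t₀ t j - movingNode P w t₀ t i ≤ h := by
  unfold movingNode at *
  rcases le_total (w i) (w j) with hij | hij
  · nlinarith [ht.2]
  · nlinarith [ht.1]

theorem countable_setOf_exists_movingNode_eq (hx : ∀ i, x ≠ P i) :
    {t | ∃ i, movingNode P w t₀ t i = x}.Countable := by
  rw [ofPred_exists]
  refine countable_iUnion fun i => Subsingleton.countable fun s hs t ht => ?_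
  have hwi : w i ≠ 0 := fun h0 => hx i ((movingNode_of_velocity_eq_zero h0).symm.trans hs).symm
  have hst : w i * (s - t₀) = w i * (t - t₀) := add_left_cancel (hs.trans ht.symm)
  exact sub_left_injective (mul_left_cancel₀ hwi hst)

theorem measurable_meshRemainder_movingNode (P w : ℕ → ℝ) (N : ℕ) (t₀ : ℝ)
    (hφ : ContDiff ℝ 1 fun p : ℝ × ℝ => φ p.1 p.2) :
    Measurable (Function.uncurry fun x t =>
      meshRemainder (movingNode P w t₀ t) w N (fun y => φ y t) x) := by
  have hnode : ∀ i, Continuous fun p : ℝ × ℝ => movingNode P w t₀ p.2 i :=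
    fun i => (continuous_movingNode P w t₀ i).comp continuous_snd
  have hφx : Continuous fun p : ℝ × ℝ => deriv (fun y => φ y p.2) p.1 :=
    (contDiff_deriv_fst (m := 0) hφ (by simp)).continuous
  exact measurable_meshRemainder measurable_fst (fun i => (hnode i).measurable)
    (fun i => (hφ.continuous.comp ((hnode i).prodMk continuous_snd)).measurable)
    fun i => (hφx.comp ((hnode i).prodMk continuous_snd)).measurable

theorem exists_abs_meshRemainder_movingNode_le (hN : 2 ≤ N) (hw1 : w 1 = 0) (hwN : w N = 0)
    (hmesh : ∀ t ∈ Icc t₀ T, StrictMonoOn (movingNode P w t₀ t) (Icc 1 N))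
    (hsize : ∀ t ∈ Icc t₀ T, ∀ i ∈ Ico 1 N,
      movingNode P w t₀ t (i + 1) - movingNode P w t₀ t i ≤ h)
    (hw : ∀ i ∈ Icc 1 N, |w i| ≤ W) (hφ : ∀ t, ContDiff ℝ 2 fun x => φ x t)
    (hφxx : Continuous fun p : ℝ × ℝ => deriv (deriv fun x => φ x p.2) p.1) :
    ∃ M, ∀ t ∈ Icc t₀ T, ∀ x,
      |meshRemainder (movingNode P w t₀ t) w N (fun y => φ y t) x| ≤ M := by
  have henergy : Continuous fun t =>
      W ^ 2 * (h * ∫ y in P 1..P N, deriv (deriv fun x => φ x t) y ^ 2) :=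
    ((continuous_intervalIntegral_sq hφxx _ _).const_mul _).const_mul _
  obtain ⟨S, hS⟩ := isCompact_Icc.exists_bound_of_continuousOn henergy.continuousOn
  refine ⟨√S, fun t ht x => Real.abs_le_sqrt ?_⟩
  have hsq := sq_meshRemainder_le (x := x) hN (hmesh t ht) (hsize t ht) hw (hφ t)
  rw [movingNode_of_velocity_eq_zero hw1, movingNode_of_velocity_eq_zero hwN] at hsq
  exact hsq.trans ((le_abs_self _).trans (hS t ht))

theorem intervalIntegrable_meshRemainder_movingNode {M : ℝ} (hT : t₀ ≤ T)
    (hφ : ContDiff ℝ 1 fun p : ℝ × ℝ => φ p.1 p.2)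
    (hM : ∀ t ∈ Icc t₀ T, |meshRemainder (movingNode P w t₀ t) w N (fun y => φ y t) x| ≤ M) :
    IntervalIntegrable
      (fun t => meshRemainder (movingNode P w t₀ t) w N (fun y => φ y t) x) volume t₀ T := by
  have hmeas : Measurable fun t => meshRemainder (movingNode P w t₀ t) w N (fun y => φ y t) x :=
    (measurable_meshRemainder_movingNode P w N t₀ hφ).of_uncurry_left
  rw [intervalIntegrable_iff_integrableOn_Ioc_of_le hT]
  refine Measure.integrableOn_of_bounded (M := M) measure_Ioc_lt_top.ne
    hmeas.aestronglyMeasurable ?_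
  filter_upwards [ae_restrict_mem measurableSet_Ioc] with t ht using hM t (Ioc_subset_Icc_self ht)

theorem memLp_meshRemainder_movingNode {a b M : ℝ} {q : ENNReal}
    (hφ : ContDiff ℝ 1 fun p : ℝ × ℝ => φ p.1 p.2)
    (hM : ∀ t ∈ Icc t₀ T, ∀ x,
      |meshRemainder (movingNode P w t₀ t) w N (fun y => φ y t) x| ≤ M) :
    MemLp (Function.uncurry fun x t =>
        meshRemainder (movingNode P w t₀ t) w N (fun y => φ y t) x) q
      ((volume.restrict (Ioc a b)).prod (volume.restrict (Ioc t₀ T))) := by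
  refine MemLp.of_bound (measurable_meshRemainder_movingNode P w N t₀ hφ).aestronglyMeasurable M ?_
  rw [Measure.prod_restrict]
  filter_upwards [ae_restrict_mem (measurableSet_Ioc.prod measurableSet_Ioc)] with z hz
    using hM z.2 (Ioc_subset_Icc_self hz.2) z.1

theorem interp_sub_interp_sub_integral_eq (hT : t₀ ≤ T) (hN : 1 ≤ N) (hw1 : w 1 = 0)
    (hwN : w N = 0) (hmesh : ∀ t ∈ Icc t₀ T, StrictMonoOn (movingNode P w t₀ t) (Icc 1 N))
    (hφ : ContDiff ℝ 1 fun p : ℝ × ℝ => φ p.1 p.2) (hx : x ∈ Ioc (P 1) (P N))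
    (hxP : ∀ i, x ≠ P i)
    (hrem : IntervalIntegrable
      (fun t => meshRemainder (movingNode P w t₀ t) w N (fun y => φ y t) x) volume t₀ T) :
    interp (movingNode P w t₀ T) N (fun y => φ y T) x - interp P N (fun y => φ y t₀) x
      - ∫ t in t₀..T, interp (movingNode P w t₀ t) N (fun y => deriv (φ y) t) x
      = ∫ t in t₀..T, meshRemainder (movingNode P w t₀ t) w N (fun y => φ y t) x := by
  have hnode : ∀ i, Continuous fun t => (movingNode P w t₀ t i, t) :=
    fun i => (continuous_movingNode P w t₀ i).prodMk continuous_id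
  have hφt : Continuous fun p : ℝ × ℝ => deriv (φ p.1) p.2 :=
    (contDiff_deriv_snd (m := 0) hφ (by simp)).continuous
  have hinterp : ContinuousOn
      (fun t => interp (movingNode P w t₀ t) N (fun y => φ y t) x) (Icc t₀ T) :=
    continuousOn_interp hmesh (fun i => (continuous_movingNode P w t₀ i).continuousOn)
      fun i => (hφ.continuous.comp (hnode i)).continuousOn
  have hinterp' : IntervalIntegrable
      (fun t => interp (movingNode P w t₀ t) N (fun y => deriv (φ y) t) x) volume t₀ T :=
    (continuousOn_interp hmesh (fun i => (continuous_movingNode P w t₀ i).continuousOn)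
      fun i => (hφt.comp (hnode i)).continuousOn).intervalIntegrable_of_Icc hT
  have hderiv : ∀ t ∈ Ioo t₀ T \ {t | ∃ i, movingNode P w t₀ t i = x},
      HasDerivAt (fun t => interp (movingNode P w t₀ t) N (fun y => φ y t) x)
        (interp (movingNode P w t₀ t) N (fun y => deriv (φ y) t) x
          + meshRemainder (movingNode P w t₀ t) w N (fun y => φ y t) x) t := by
    intro t ⟨ht, hnotNode⟩
    have hx_ends : x ∈ Ioc (movingNode P w t₀ t 1) (movingNode P w t₀ t N) := by
      rwa [movingNode_of_velocity_eq_zero hw1, movingNode_of_velocity_eq_zero hwN]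
    obtain ⟨i, hi, hxi⟩ := exists_mem_Icc_consecutive hN hx_ends
    have hne : ∀ j, movingNode P w t₀ t j ≠ x := fun j hj => hnotNode ⟨j, hj⟩
    refine hasDerivAt_interp ?_ (hasDerivAt_movingNode P w t₀ t) (hφ.differentiable one_ne_zero)
      hi ⟨hxi.1.lt_of_ne (hne i), hxi.2.lt_of_ne (hne (i + 1)).symm⟩
    filter_upwards [Icc_mem_nhds ht.1 ht.2] with s hs using hmesh s hs
  have hftc := integral_eq_of_hasDerivAt_off_countable_of_le _ _ hT
    (countable_setOf_exists_movingNode_eq hxP) hinterp hderiv (hinterp'.add hrem)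
  rw [movingNode_self, intervalIntegral.integral_add hinterp' hrem] at hftc
  rw [← hftc, add_sub_cancel_left]

theorem integral_sq_interp_sub_interp_sub_integral_le (hT : t₀ ≤ T) (hN : 2 ≤ N) (hw1 : w 1 = 0)
    (hwN : w N = 0) (hmesh : ∀ t ∈ Icc t₀ T, StrictMonoOn (movingNode P w t₀ t) (Icc 1 N))
    (hsize : ∀ t ∈ Icc t₀ T, ∀ i ∈ Ico 1 N,
      movingNode P w t₀ t (i + 1) - movingNode P w t₀ t i ≤ h)
    (hw : ∀ i ∈ Icc 1 N, |w i| ≤ W) (hφ : ContDiff ℝ 1 fun p : ℝ × ℝ => φ p.1 p.2)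
    (hφ₂ : ∀ t, ContDiff ℝ 2 fun x => φ x t)
    (hφxx : Continuous fun p : ℝ × ℝ => deriv (deriv fun x => φ x p.2) p.1) :
    ∫ x in P 1..P N, (interp (movingNode P w t₀ T) N (fun y => φ y T) x
        - interp P N (fun y => φ y t₀) x
        - ∫ t in t₀..T, interp (movingNode P w t₀ t) N (fun y => deriv (φ y) t) x) ^ 2
      ≤ (T - t₀) * (W ^ 2 * h ^ 2 *
        ∫ t in t₀..T, ∫ x in P 1..P N, deriv (deriv fun y => φ y t) x ^ 2) := by
  set R : ℝ → ℝ → ℝ := fun x t => meshRemainder (movingNode P w t₀ t) w N (fun y => φ y t) x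
  obtain ⟨M, hM⟩ := exists_abs_meshRemainder_movingNode_le hN hw1 hwN hmesh hsize hw hφ₂ hφxx
  have hends : P 1 ≤ P N := by
    have := (hmesh t₀ ⟨le_rfl, hT⟩).monotoneOn ⟨le_rfl, by omega⟩ ⟨by omega, le_rfl⟩
      (show 1 ≤ N by omega)
    rwa [movingNode_self] at this
  have hR_memLp : MemLp (Function.uncurry R) 2
      ((volume.restrict (Ioc (P 1) (P N))).prod (volume.restrict (Ioc t₀ T))) :=
    memLp_meshRemainder_movingNode hφ hM
  have hgeneric : ∀ᵐ x ∂volume.restrict (Ioc (P 1) (P N)), ∀ i, x ≠ P i :=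
    ae_all_iff.2 fun i => ae_restrict_of_ae (Measure.ae_ne volume (P i))
  rw [intervalIntegral.integral_of_le hends]
  calc _ = ∫ x in Ioc (P 1) (P N), (∫ t in Ioc t₀ T, R x t) ^ 2 := by
        refine integral_congr_ae ?_
        filter_upwards [hgeneric, ae_restrict_mem measurableSet_Ioc] with x hxP hx
        rw [interp_sub_interp_sub_integral_eq hT (by omega) hw1 hwN hmesh hφ hx hxP
            (intervalIntegrable_meshRemainder_movingNode hT hφ fun t ht => hM t ht x),
          intervalIntegral.integral_of_le hT]
    _ ≤ (T - t₀) * ∫ t in Ioc t₀ T, ∫ x in Ioc (P 1) (P N), R x t ^ 2 := by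
        simpa [hT] using integral_sq_integral_le_of_memLp_prod hR_memLp
    _ ≤ (T - t₀) * ∫ t in Ioc t₀ T,
          W ^ 2 * h ^ 2 * ∫ x in P 1..P N, deriv (deriv fun y => φ y t) x ^ 2 := by
        refine mul_le_mul_of_nonneg_left (setIntegral_mono_on
          hR_memLp.integrable_sq.integral_prod_right
          ((continuous_intervalIntegral_sq hφxx _ _).const_mul _).integrableOn_Ioc
          measurableSet_Ioc fun t ht => ?_) (sub_nonneg.2 hT)
        have ht := Ioc_subset_Icc_self ht
        have hbound := integral_sq_meshRemainder_le hN (hmesh t ht) (hsize t ht) hw (hφ₂ t)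
        rwa [movingNode_of_velocity_eq_zero hw1, movingNode_of_velocity_eq_zero hwN,
          intervalIntegral.integral_of_le hends] at hbound
    _ = _ := by rw [integral_const_mul, ← intervalIntegral.integral_of_le hT]

theorem moving_interpolation_time_difference_L2_general {a b Δt : ℝ} (hΔt : 0 < Δt) (hN : 2 ≤ N)
    (ha : P 1 = a) (hb : P N = b) (ha' : P 1 + w 1 * Δt = a) (hb' : P N + w N * Δt = b)
    (hmesh : ∀ t ∈ Icc t₀ (t₀ + Δt), StrictMonoOn (fun i => P i + w i * (t - t₀)) (Icc 1 N))
    (hsize : ∀ i ∈ Ico 1 N,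
      P (i + 1) - P i ≤ h ∧ (P (i + 1) + w (i + 1) * Δt) - (P i + w i * Δt) ≤ h)
    (hw : ∀ i ∈ Icc 1 N, |w i| ≤ W) (hφ : ContDiff ℝ 1 fun p : ℝ × ℝ => φ p.1 p.2)
    (hφ₂ : ∀ t, ContDiff ℝ 2 fun x => φ x t)
    (hφxx : Continuous fun p : ℝ × ℝ => deriv (deriv fun x => φ x p.2) p.1) :
    √(∫ x in a..b,
        ((interp (fun i => P i + w i * Δt) N (fun y => φ y (t₀ + Δt)) x
            - interp P N (fun y => φ y t₀) x) / Δt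
          - (1 / Δt) * ∫ t in t₀..(t₀ + Δt),
              interp (fun i => P i + w i * (t - t₀)) N (fun y => deriv (φ y) t) x) ^ 2)
      ≤ W * h / √Δt * √(∫ t in t₀..(t₀ + Δt), ∫ x in a..b, deriv (deriv fun y => φ y t) x ^ 2) := by
  have hT : t₀ ≤ t₀ + Δt := by linarith
  have hw1 : w 1 = 0 := by simpa [hΔt.ne'] using ha'.trans ha.symm
  have hwN : w N = 0 := by simpa [hΔt.ne'] using hb'.trans hb.symm
  have hfinal : movingNode P w t₀ (t₀ + Δt) = fun i => P i + w i * Δt := by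
    funext i
    rw [movingNode, add_sub_cancel_left]
  have hsize' : ∀ t ∈ Icc t₀ (t₀ + Δt), ∀ i ∈ Ico 1 N,
      movingNode P w t₀ t (i + 1) - movingNode P w t₀ t i ≤ h := fun t ht i hi =>
    movingNode_sub_movingNode_le (hsize i hi).1 (by simpa only [hfinal] using (hsize i hi).2) ht
  have hWh : 0 ≤ W * h := by
    have hlt : P 1 < P 2 := by
      simpa using hmesh t₀ ⟨le_rfl, hT⟩ ⟨le_rfl, by omega⟩ ⟨by omega, hN⟩ one_lt_two
    exact mul_nonneg ((abs_nonneg _).trans (hw 1 ⟨le_rfl, by omega⟩))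
      ((sub_pos.2 hlt).le.trans (hsize 1 ⟨le_rfl, hN⟩).1)
  have hsq :=
    integral_sq_interp_sub_interp_sub_integral_le hT hN hw1 hwN hmesh hsize' hw hφ hφ₂ hφxx
  rw [hfinal, ha, hb, add_sub_cancel_left] at hsq
  set E := ∫ t in t₀..(t₀ + Δt), ∫ x in a..b, deriv (deriv fun y => φ y t) x ^ 2
  have hscale : ∀ A B : ℝ, (A / Δt - 1 / Δt * B) ^ 2 = (1 / Δt ^ 2) * (A - B) ^ 2 := fun A B => by
    field_simp
  simp only [hscale]
  rw [intervalIntegral.integral_const_mul]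
  calc _ ≤ √(1 / Δt ^ 2 * (Δt * (W ^ 2 * h ^ 2 * E))) :=
        Real.sqrt_le_sqrt (mul_le_mul_of_nonneg_left hsq (by positivity))
    _ = √((W * h) ^ 2 / Δt * E) := by
        congr 1
        field_simp
    _ = W * h / √Δt * √E := by
        rw [Real.sqrt_mul (by positivity), Real.sqrt_div (sq_nonneg _), Real.sqrt_sq hWh]

end MovingMesh

/-- **L² estimate for the time difference of the moving interpolation operator.**
The nodes move affinely, `Pᵢ(t) = Pᵢ + wᵢ (t − t₀)`, with velocities bounded by `W`;
`h` bounds the element sizes at both time levels.  Then the difference quotient of the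
moving interpolant deviates from the time average of the interpolated time derivative
by at most `C h/√Δt` times the `L²L²` norm of `∂ₓ²φ`, with `C = C(W)`. -/
theorem moving_interpolation_time_difference_L2
    (W : ℝ) (hW : 0 ≤ W) :
    ∃ C : ℝ, 0 < C ∧
      ∀ (a b t0 Δt h : ℝ) (N : ℕ) (P w : ℕ → ℝ) (φ : ℝ → ℝ → ℝ),
        a < b → 0 < Δt → 0 < h → 2 ≤ N →
        P 1 = a → P N = b →
        P 1 + w 1 * Δt = a → P N + w N * Δt = b →
        (∀ t ∈ Set.Icc t0 (t0 + Δt), ∀ i j : ℕ, 1 ≤ i → i < j → j ≤ N →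
          P i + w i * (t - t0) < P j + w j * (t - t0)) →
        (∀ i : ℕ, 1 ≤ i → i < N →
          P (i + 1) - P i ≤ h ∧ (P (i + 1) + w (i + 1) * Δt) - (P i + w i * Δt) ≤ h) →
        (∀ i : ℕ, 1 ≤ i → i ≤ N → |w i| ≤ W) →
        ContDiff ℝ 2 (fun p : ℝ × ℝ => φ p.1 p.2) →
        Real.sqrt (∫ x in a..b,
            ((interp (fun i => P i + w i * Δt) N (fun y => φ y (t0 + Δt)) x
                - interp P N (fun y => φ y t0) x) / Δt
              - (1 / Δt) * ∫ t in t0..(t0 + Δt),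
                  interp (fun i => P i + w i * (t - t0)) N
                    (fun y => deriv (fun s => φ y s) t) x) ^ 2)
          ≤ C * h / Real.sqrt Δt *
            Real.sqrt (∫ t in t0..(t0 + Δt), ∫ x in a..b,
              (deriv (fun y => deriv (fun z => φ z t) y) x) ^ 2) := by
  refine ⟨W + 1, by positivity, fun a b t0 Δt h N P w φ _ hΔt hh hN ha hb ha' hb' hmono hsize hw
    hφ => (moving_interpolation_time_difference_L2_general hΔt hN ha hb ha' hb'
      (fun t ht i hi j hj hij => hmono t ht i j hi.1 hij hj.2) (fun i hi => hsize i hi.1 hi.2)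
      (fun i hi => hw i hi.1 hi.2) (hφ.of_le one_le_two)
      (fun t => hφ.comp (contDiff_id.prodMk contDiff_const))
      (contDiff_deriv_deriv_fst (m := 0) hφ (by norm_num)).continuous).trans ?_⟩
  gcongr
  exact (lt_add_one W).le
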